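/- Let λ₁,...,λ_N be distinct real numbers with |λ_j - λ_k| ≥ δ > 0 for j ≠ k, and c₁,...,c_N ∈ ℂ. Then for every T > 0, ∫₀^T |Σ_{k=1}^N c_k e^{iλ_k s}|² ds ≥ (T - 2π/δ)·Σ_{k=1}^N |c_k|². -/

import Mathlib

open Complex Real

/-!
Let `H` be the Hermitian matrix with off-diagonal entries `I / (x r - x s)`. When the coefficients
`c k` rotate with the phases `exp (I * (x k * t))`, the form `star c ⬝ᵥ H *ᵥ c` has derivative
`‖∑ k, c k * exp (I * (x k * t))‖ ^ 2 - ∑ k, ‖c k‖ ^ 2`, because `⁅H, diagonal x⁆` is constant off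
the diagonal. The mean value estimate thus reduces to Hilbert's inequality `‖H‖ ≤ π / δ`.

By partial fractions `H * H = ⁅D, H⁆ + 2 • P + R`, where `P` has entries `1 / (x r - x s) ^ 2` and
the diagonal matrices `D` and `R` consist of the row sums of `H` and `P`. The quadratic form of the
commutator vanishes on eigenvectors of `H`, so `‖H‖ ^ 2 ≤ 2 * ‖P‖ + ‖R‖`. By separation the points
on either side of `x r` contribute at most `ζ(2) / δ ^ 2` to a row sum of `P`, whence
`‖H‖ ^ 2 ≤ 3 * (2 * ζ(2) / δ ^ 2) = (π / δ) ^ 2`.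
-/

open Matrix
open scoped Matrix.Norms.L2Operator

section HermitianMatrix

variable {𝕜 ι : Type*} [RCLike 𝕜] [Fintype ι] [DecidableEq ι] {A : Matrix ι ι 𝕜}

lemma norm_star_dotProduct_mulVec_le (A : Matrix ι ι 𝕜) (v : ι → 𝕜) :
    ‖star v ⬝ᵥ A *ᵥ v‖ ≤ ‖A‖ * ∑ i, ‖v i‖ ^ 2 := by
  calc ‖star v ⬝ᵥ A *ᵥ v‖ = ‖inner 𝕜 (WithLp.toLp 2 v) (WithLp.toLp 2 (A *ᵥ v))‖ := by
        rw [EuclideanSpace.inner_toLp_toLp, dotProduct_comm]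
    _ ≤ ‖WithLp.toLp 2 v‖ * ‖WithLp.toLp 2 (A *ᵥ v)‖ := norm_inner_le_norm _ _
    _ ≤ ‖WithLp.toLp 2 v‖ * (‖A‖ * ‖WithLp.toLp 2 v‖) := by
        gcongr
        exact l2_opNorm_mulVec A (WithLp.toLp 2 v)
    _ = ‖A‖ * ∑ i, ‖v i‖ ^ 2 := by
        rw [← EuclideanSpace.norm_sq_eq (WithLp.toLp 2 v)]
        ring

lemma l2_opNorm_eq_norm_eigenvalues (hA : A.IsHermitian) : ‖A‖ = ‖hA.eigenvalues‖ := by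
  conv_lhs => rw [hA.spectral_theorem, Unitary.conjStarAlgAut_apply]
  rw [← Unitary.coe_star, CStarRing.norm_mul_coe_unitary, CStarRing.norm_coe_unitary_mul,
    l2_opNorm_diagonal]
  simp only [Pi.norm_def, Function.comp_apply, nnnorm_algebraMap']

lemma l2_opNorm_le_of_sum_row_norm_le {M : ℝ} (hA : A.IsHermitian) (hM : 0 ≤ M)
    (hrow : ∀ i, ∑ j, ‖A i j‖ ≤ M) : ‖A‖ ≤ M := by
  rw [l2_opNorm_eq_norm_eigenvalues hA, pi_norm_le_iff_of_nonneg hM]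
  intro i
  have heig : Module.End.HasEigenvalue (toLin' A) (hA.eigenvalues i : 𝕜) := by
    rw [Module.End.hasEigenvalue_iff_mem_spectrum, spectrum_toLin', hA.spectrum_eq_image_range]
    exact Set.mem_image_of_mem _ (Set.mem_range_self i)
  obtain ⟨k, hk⟩ := eigenvalue_mem_ball heig
  rw [mem_closedBall_iff_norm] at hk
  calc ‖hA.eigenvalues i‖ = ‖(hA.eigenvalues i : 𝕜)‖ := (RCLike.norm_ofReal _).symm
    _ ≤ ‖A k k‖ + ‖(hA.eigenvalues i : 𝕜) - A k k‖ := norm_le_norm_add_norm_sub' _ _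
    _ ≤ ‖A k k‖ + ∑ j ∈ Finset.univ.erase k, ‖A k j‖ := by gcongr
    _ = ∑ j, ‖A k j‖ := Finset.add_sum_erase _ (fun j ↦ ‖A k j‖) (Finset.mem_univ k)
    _ ≤ M := hrow k

omit [DecidableEq ι] in
lemma star_dotProduct_lie_mulVec_eq_zero (hA : A.IsHermitian) (D : Matrix ι ι 𝕜) {v : ι → 𝕜}
    {μ : ℝ} (hv : A *ᵥ v = μ • v) : star v ⬝ᵥ ⁅D, A⁆ *ᵥ v = 0 := by
  have hv' : star v ᵥ* A = μ • star v := by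
    rw [← hA.eq, ← star_mulVec, hv, star_smul, star_trivial]
  rw [Ring.lie_def, sub_mulVec, dotProduct_sub, ← mulVec_mulVec, ← mulVec_mulVec, hv,
    dotProduct_mulVec _ A, hv', mulVec_smul, dotProduct_smul, smul_dotProduct, sub_self]

lemma l2_opNorm_sq_le_of_mul_self_eq_lie_add (hA : A.IsHermitian) {D Q : Matrix ι ι 𝕜}
    (h : A * A = ⁅D, A⁆ + Q) : ‖A‖ ^ 2 ≤ ‖Q‖ := by
  suffices ‖A‖ ≤ √‖Q‖ from (Real.le_sqrt (norm_nonneg A) (norm_nonneg Q)).1 this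
  rw [l2_opNorm_eq_norm_eigenvalues hA, pi_norm_le_iff_of_nonneg (Real.sqrt_nonneg _)]
  intro i
  set μ := hA.eigenvalues i
  set v : ι → 𝕜 := ⇑(hA.eigenvectorBasis i)
  have hv : A *ᵥ v = μ • v := hA.mulVec_eigenvectorBasis i
  have hv_unit : ∑ j, ‖v j‖ ^ 2 = 1 := by
    rw [← EuclideanSpace.norm_sq_eq, hA.eigenvectorBasis.orthonormal.1 i, one_pow]
  have hv_self : star v ⬝ᵥ v = 1 := by
    rw [dotProduct_comm, ← EuclideanSpace.inner_eq_star_dotProduct, inner_self_eq_norm_sq_to_K,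
      hA.eigenvectorBasis.orthonormal.1 i, RCLike.ofReal_one, one_pow]
  apply Real.le_sqrt_of_sq_le
  calc ‖μ‖ ^ 2 = ‖star v ⬝ᵥ (A * A) *ᵥ v‖ := by
        rw [← mulVec_mulVec, hv, mulVec_smul, hv, dotProduct_smul, dotProduct_smul, hv_self,
          norm_smul, norm_smul, norm_one, mul_one, sq]
    _ = ‖star v ⬝ᵥ Q *ᵥ v‖ := by
        rw [h, add_mulVec, dotProduct_add, star_dotProduct_lie_mulVec_eq_zero hA D hv, zero_add]
    _ ≤ ‖Q‖ := by
        simpa only [hv_unit, mul_one] using norm_star_dotProduct_mulVec_le Q v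

end HermitianMatrix

section Separated

variable {ι : Type*} {x : ι → ℝ} {δ : ℝ}

lemma injOn_natFloor_div_of_pairwise_le_abs_sub {S : Set ι} (hδ : 0 < δ)
    (hnonneg : ∀ i ∈ S, 0 ≤ x i) (hsep : S.Pairwise fun i j ↦ δ ≤ |x i - x j|) :
    S.InjOn fun i ↦ ⌊x i / δ⌋₊ := by
  intro i hi j hj (hij : ⌊x i / δ⌋₊ = ⌊x j / δ⌋₊)
  by_contra hne
  have hlt : |x i / δ - x j / δ| < 1 := by
    apply Int.abs_sub_lt_one_of_floor_eq_floor
    rw [← Int.natCast_floor_eq_floor (div_nonneg (hnonneg i hi) hδ.le),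
      ← Int.natCast_floor_eq_floor (div_nonneg (hnonneg j hj) hδ.le), hij]
  rw [← sub_div, abs_div, abs_of_pos hδ, div_lt_one hδ] at hlt
  exact (hsep hi hj hne).not_gt hlt

lemma sum_inv_sq_le_of_pairwise_le_abs_sub {S : Finset ι} (hδ : 0 < δ)
    (hle : ∀ i ∈ S, δ ≤ x i) (hsep : (S : Set ι).Pairwise fun i j ↦ δ ≤ |x i - x j|) :
    ∑ i ∈ S, (x i ^ 2)⁻¹ ≤ π ^ 2 / 6 / δ ^ 2 := by
  have hinj : Set.InjOn (fun i ↦ ⌊x i / δ⌋₊) S :=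
    injOn_natFloor_div_of_pairwise_le_abs_sub hδ (fun i hi ↦ hδ.le.trans (hle i hi)) hsep
  have hterm : ∀ i ∈ S, (x i ^ 2)⁻¹ * δ ^ 2 ≤ 1 / (⌊x i / δ⌋₊ : ℝ) ^ 2 := by
    intro i hi
    have hfloor_pos : 0 < ⌊x i / δ⌋₊ := Nat.floor_pos.2 ((one_le_div hδ).2 (hle i hi))
    calc (x i ^ 2)⁻¹ * δ ^ 2 = 1 / (x i / δ) ^ 2 := by
          rw [div_pow, one_div_div, div_eq_inv_mul]
      _ ≤ 1 / (⌊x i / δ⌋₊ : ℝ) ^ 2 := by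
          gcongr
          exact Nat.floor_le (div_nonneg (hδ.le.trans (hle i hi)) hδ.le)
  rw [le_div_iff₀ (by positivity), Finset.sum_mul]
  calc ∑ i ∈ S, (x i ^ 2)⁻¹ * δ ^ 2 ≤ ∑ i ∈ S, 1 / (⌊x i / δ⌋₊ : ℝ) ^ 2 :=
        Finset.sum_le_sum hterm
    _ = ∑ n ∈ S.image fun i ↦ ⌊x i / δ⌋₊, 1 / (n : ℝ) ^ 2 :=
        (Finset.sum_image (f := fun n : ℕ ↦ 1 / (n : ℝ) ^ 2) hinj).symm
    _ ≤ π ^ 2 / 6 := sum_le_hasSum _ (fun n _ ↦ by positivity) hasSum_zeta_two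

lemma sum_inv_sub_sq_le_of_pairwise_le_abs_sub [Fintype ι] (hδ : 0 < δ)
    (hsep : Pairwise fun i j ↦ δ ≤ |x i - x j|) (i : ι) :
    ∑ j, ((x i - x j) ^ 2)⁻¹ ≤ π ^ 2 / 3 / δ ^ 2 := by
  classical
  have hright : ∑ j with x i < x j, ((x j - x i) ^ 2)⁻¹ ≤ π ^ 2 / 6 / δ ^ 2 := by
    refine sum_inv_sq_le_of_pairwise_le_abs_sub hδ (fun j hj ↦ ?_) fun j _ k _ hjk ↦ ?_
    · have hij := (Finset.mem_filter.1 hj).2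
      simpa only [abs_of_pos (sub_pos.2 hij)] using hsep (ne_of_apply_ne x hij.ne')
    · simpa only [sub_sub_sub_cancel_right] using hsep hjk
  have hleft : ∑ j with x j < x i, ((x i - x j) ^ 2)⁻¹ ≤ π ^ 2 / 6 / δ ^ 2 := by
    refine sum_inv_sq_le_of_pairwise_le_abs_sub hδ (fun j hj ↦ ?_) fun j _ k _ hjk ↦ ?_
    · have hji := (Finset.mem_filter.1 hj).2
      simpa only [abs_of_pos (sub_pos.2 hji)] using hsep (ne_of_apply_ne x hji.ne')
    · simpa only [sub_sub_sub_cancel_left] using hsep hjk.symm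
  calc ∑ j, ((x i - x j) ^ 2)⁻¹
      = ∑ j with x i < x j, ((x j - x i) ^ 2)⁻¹ + ∑ j with x j < x i, ((x i - x j) ^ 2)⁻¹ := by
        rw [Finset.sum_filter, Finset.sum_filter, ← Finset.sum_add_distrib]
        refine Finset.sum_congr rfl fun j _ ↦ ?_
        rcases lt_trichotomy (x i) (x j) with h | h | h
        · simp only [h, h.not_gt, if_true, if_false, add_zero, sub_sq_comm]
        · simp [h]
        · simp only [h, h.not_gt, if_true, if_false, zero_add]
    _ ≤ π ^ 2 / 6 / δ ^ 2 + π ^ 2 / 6 / δ ^ 2 := add_le_add hright hleft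
    _ = π ^ 2 / 3 / δ ^ 2 := by ring

lemma injective_of_pairwise_le_abs_sub (hδ : 0 < δ) (hsep : Pairwise fun i j ↦ δ ≤ |x i - x j|) :
    Function.Injective x := by
  intro i j hij
  by_contra hne
  have hle : δ ≤ |x i - x j| := hsep hne
  rw [hij, sub_self, abs_zero] at hle
  exact hle.not_gt hδ

end Separated

section HilbertMatrix

variable {ι : Type*} {x : ι → ℝ}

/-- The Hermitian form of the generalized Hilbert matrix with nodes `x`, i.e. `I` times the usual
skew-symmetric one. Since `I / 0 = 0`, the diagonal entries vanish. -/
noncomputable def hilbertMatrix (x : ι → ℝ) : Matrix ι ι ℂ :=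
  of fun r s ↦ I / (x r - x s)

/-- The matrix of squared absolute values of the entries of `hilbertMatrix x`, again with vanishing
diagonal. -/
noncomputable def inverseSquareMatrix (x : ι → ℝ) : Matrix ι ι ℂ :=
  of fun r s ↦ (((x r - x s) ^ 2)⁻¹ : ℝ)

lemma isHermitian_hilbertMatrix (x : ι → ℝ) : (hilbertMatrix x).IsHermitian := by
  ext r s
  simp only [hilbertMatrix, conjTranspose_apply, of_apply, star_def, map_div₀, map_sub, conj_I,
    conj_ofReal]
  rw [← neg_sub (x r : ℂ), neg_div_neg_eq]

lemma isHermitian_inverseSquareMatrix (x : ι → ℝ) : (inverseSquareMatrix x).IsHermitian := by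
  ext r s
  simp only [inverseSquareMatrix, conjTranspose_apply, of_apply, star_def, conj_ofReal,
    sub_sq_comm (x r)]

lemma inverseSquareMatrix_apply_self (x : ι → ℝ) (r : ι) : inverseSquareMatrix x r r = 0 := by
  simp [inverseSquareMatrix]

lemma hilbertMatrix_apply_mul_apply_swap (x : ι → ℝ) (r s : ι) :
    hilbertMatrix x r s * hilbertMatrix x s r = inverseSquareMatrix x r s := by
  simp only [hilbertMatrix, inverseSquareMatrix, of_apply]
  rw [← neg_sub (x r : ℂ), div_neg, mul_neg, div_mul_div_comm, I_mul_I]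
  push_cast
  ring

-- A partial fraction expansion; the corrections at `r = s` and `r = t` come from the zero diagonal.
lemma hilbertMatrix_apply_mul_apply [DecidableEq ι] (hx : Function.Injective x) {s t : ι}
    (hst : s ≠ t) (r : ι) :
    hilbertMatrix x s r * hilbertMatrix x r t =
      (hilbertMatrix x s r - hilbertMatrix x t r) * hilbertMatrix x s t +
        ((if s = r then inverseSquareMatrix x s t else 0) +
          if t = r then inverseSquareMatrix x s t else 0) := by
  have hsub {i j : ι} (hij : i ≠ j) : (x i - x j : ℂ) ≠ 0 :=
    sub_ne_zero.2 (ofReal_injective.ne (hx.ne hij))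
  have hst' := hsub hst
  have hts' := hsub hst.symm
  simp only [hilbertMatrix, inverseSquareMatrix, of_apply]
  push_cast
  rcases eq_or_ne s r with rfl | hsr
  · simp only [hst.symm, if_true, if_false, sub_self, div_zero]
    field_simp
    linear_combination (x s - x t : ℂ) * I_sq
  rcases eq_or_ne t r with rfl | htr
  · simp only [hst, if_true, if_false, sub_self, div_zero]
    field_simp
    linear_combination -I_sq
  have hsr' := hsub hsr
  have hrt' := hsub htr.symm
  have htr' := hsub htr
  simp only [hsr, htr, if_false]
  field_simp
  ring

variable [Fintype ι]

lemma hilbertMatrix_mul_self [DecidableEq ι] (hx : Function.Injective x) :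
    hilbertMatrix x * hilbertMatrix x =
      ⁅diagonal fun s ↦ ∑ r, hilbertMatrix x s r, hilbertMatrix x⁆ +
        (2 • inverseSquareMatrix x + diagonal fun s ↦ ∑ r, inverseSquareMatrix x s r) := by
  ext s t
  rw [mul_apply]
  simp only [Ring.lie_def, Matrix.add_apply, Matrix.sub_apply, Matrix.smul_apply, diagonal_mul,
    mul_diagonal]
  rcases eq_or_ne s t with rfl | hst
  · simp only [hilbertMatrix_apply_mul_apply_swap, inverseSquareMatrix_apply_self,
      diagonal_apply_eq, smul_zero]
    ring
  · simp only [hilbertMatrix_apply_mul_apply hx hst, Finset.sum_add_distrib, Finset.sum_ite_eq,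
      Finset.mem_univ, if_true, ← Finset.sum_mul, Finset.sum_sub_distrib, diagonal_apply_ne _ hst]
    rw [two_smul]
    ring

variable {δ : ℝ}

lemma sum_norm_inverseSquareMatrix_le (hδ : 0 < δ)
    (hsep : Pairwise fun i j ↦ δ ≤ |x i - x j|) (r : ι) :
    ∑ s, ‖inverseSquareMatrix x r s‖ ≤ π ^ 2 / 3 / δ ^ 2 := by
  simp only [inverseSquareMatrix, of_apply, norm_real, norm_inv, norm_pow, norm_eq_abs, sq_abs]
  exact sum_inv_sub_sq_le_of_pairwise_le_abs_sub hδ hsep r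

/-- The Montgomery–Vaughan form of **Hilbert's inequality**. -/
lemma l2_opNorm_hilbertMatrix_le [DecidableEq ι] (hδ : 0 < δ)
    (hsep : Pairwise fun i j ↦ δ ≤ |x i - x j|) : ‖hilbertMatrix x‖ ≤ π / δ := by
  have hx : Function.Injective x := injective_of_pairwise_le_abs_sub hδ hsep
  have hrow := sum_norm_inverseSquareMatrix_le hδ hsep
  have hoff : ‖inverseSquareMatrix x‖ ≤ π ^ 2 / 3 / δ ^ 2 :=
    l2_opNorm_le_of_sum_row_norm_le (isHermitian_inverseSquareMatrix x) (by positivity) hrow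
  have hdiag : ‖diagonal fun s ↦ ∑ r, inverseSquareMatrix x s r‖ ≤ π ^ 2 / 3 / δ ^ 2 := by
    rw [l2_opNorm_diagonal, pi_norm_le_iff_of_nonneg (by positivity)]
    intro r
    exact (norm_sum_le _ _).trans (hrow r)
  refine le_of_sq_le_sq ?_ (by positivity)
  calc ‖hilbertMatrix x‖ ^ 2
      ≤ ‖2 • inverseSquareMatrix x + diagonal fun s ↦ ∑ r, inverseSquareMatrix x s r‖ :=
        l2_opNorm_sq_le_of_mul_self_eq_lie_add (isHermitian_hilbertMatrix x)
          (hilbertMatrix_mul_self hx)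
    _ ≤ ‖2 • inverseSquareMatrix x‖ + ‖diagonal fun s ↦ ∑ r, inverseSquareMatrix x s r‖ :=
        norm_add_le _ _
    _ ≤ 2 * (π ^ 2 / 3 / δ ^ 2) + π ^ 2 / 3 / δ ^ 2 := by
        gcongr
        exact norm_nsmul_le.trans (by gcongr; simp)
    _ = (π / δ) ^ 2 := by ring

end HilbertMatrix

section ExponentialSum

variable {ι : Type*} [Fintype ι] {x : ι → ℝ}

/-- The coefficients `c` at time `t`, when the `k`-th one rotates with angular frequency `x k`. -/
noncomputable def rotatedCoeff (x : ι → ℝ) (c : ι → ℂ) (t : ℝ) : ι → ℂ :=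
  fun k ↦ c k * exp (I * (x k * t))

omit [Fintype ι] in
lemma norm_rotatedCoeff_apply (x : ι → ℝ) (c : ι → ℂ) (t : ℝ) (k : ι) :
    ‖rotatedCoeff x c t k‖ = ‖c k‖ := by
  rw [rotatedCoeff, norm_mul, ← ofReal_mul, norm_exp_I_mul_ofReal, mul_one]

lemma hasDerivAt_rotatedCoeff [DecidableEq ι] (x : ι → ℝ) (c : ι → ℂ) (t : ℝ) :
    HasDerivAt (rotatedCoeff x c)
      (I • diagonal (fun k ↦ (x k : ℂ)) *ᵥ rotatedCoeff x c t) t := by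
  refine hasDerivAt_pi.2 fun k ↦ ?_
  have hphase : HasDerivAt (fun s : ℝ ↦ I * (x k * (s : ℂ))) (I * (x k * 1)) t :=
    (ofRealCLM.hasDerivAt.const_mul (x k : ℂ)).const_mul I
  refine (hphase.cexp.const_mul (c k)).congr_deriv ?_
  simp only [Pi.smul_apply, mulVec_diagonal, rotatedCoeff, smul_eq_mul]
  ring

lemma hasDerivAt_star_dotProduct_mulVec (A : Matrix ι ι ℂ) {w : ℝ → ι → ℂ} {w' : ι → ℂ} {t : ℝ}
    (hw : HasDerivAt w w' t) :
    HasDerivAt (fun s ↦ star (w s) ⬝ᵥ A *ᵥ w s)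
      (star w' ⬝ᵥ A *ᵥ w t + star (w t) ⬝ᵥ A *ᵥ w') t := by
  have hAw : HasDerivAt (fun s ↦ A *ᵥ w s) (A *ᵥ w') t :=
    hasDerivAt_pi.2 fun i ↦ HasDerivAt.fun_sum fun j _ ↦ (hasDerivAt_pi.1 hw j).const_mul (A i j)
  simp only [dotProduct, ← Finset.sum_add_distrib]
  exact HasDerivAt.fun_sum fun i _ ↦ (hasDerivAt_pi.1 hw.star i).mul (hasDerivAt_pi.1 hAw i)

lemma hasDerivAt_star_rotatedCoeff_dotProduct_mulVec [DecidableEq ι] (A : Matrix ι ι ℂ)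
    (x : ι → ℝ) (c : ι → ℂ) (t : ℝ) :
    HasDerivAt (fun s ↦ star (rotatedCoeff x c s) ⬝ᵥ A *ᵥ rotatedCoeff x c s)
      (star (rotatedCoeff x c t) ⬝ᵥ
        (I • ⁅A, diagonal fun k ↦ (x k : ℂ)⁆) *ᵥ rotatedCoeff x c t) t := by
  convert hasDerivAt_star_dotProduct_mulVec A (hasDerivAt_rotatedCoeff x c t) using 1
  have hdiag : (diagonal fun k ↦ (x k : ℂ))ᴴ = diagonal fun k ↦ (x k : ℂ) := by
    simp [diagonal_conjTranspose, Pi.star_def]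
  rw [star_smul, star_mulVec, hdiag, smul_dotProduct, ← dotProduct_mulVec, mulVec_smul,
    dotProduct_smul, smul_mulVec, dotProduct_smul, Ring.lie_def, sub_mulVec, dotProduct_sub,
    mulVec_mulVec, mulVec_mulVec, star_def, conj_I]
  simp only [smul_eq_mul]
  ring

lemma smul_lie_hilbertMatrix_diagonal [DecidableEq ι] (hx : Function.Injective x) :
    I • ⁅hilbertMatrix x, diagonal fun k ↦ (x k : ℂ)⁆ = vecMulVec 1 1 - 1 := by
  ext j k
  simp only [Ring.lie_def, Matrix.smul_apply, Matrix.sub_apply, diagonal_mul, mul_diagonal,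
    vecMulVec_apply, Pi.one_apply, mul_one, hilbertMatrix, of_apply, smul_eq_mul]
  rcases eq_or_ne j k with rfl | hjk
  · simp
  · have hsub : (x j - x k : ℂ) ≠ 0 := sub_ne_zero.2 (ofReal_injective.ne (hx.ne hjk))
    rw [one_apply_ne hjk]
    field_simp
    linear_combination (x k - x j : ℂ) * I_sq

lemma star_dotProduct_vecMulVec_one_sub_one_mulVec [DecidableEq ι] (v : ι → ℂ) :
    star v ⬝ᵥ (vecMulVec 1 1 - 1) *ᵥ v = ((‖∑ k, v k‖ ^ 2 - ∑ k, ‖v k‖ ^ 2 : ℝ) : ℂ) := by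
  rw [sub_mulVec, one_mulVec, dotProduct_sub, vecMulVec_mulVec, one_dotProduct, op_smul_eq_smul,
    dotProduct_smul, dotProduct_one]
  push_cast
  simp only [← mul_conj', map_sum, dotProduct, Pi.star_apply, star_def, smul_eq_mul, mul_comm]

lemma integral_norm_sum_rotatedCoeff_sq (hx : Function.Injective x) (c : ι → ℂ) (a b : ℝ) :
    ((∫ t in a..b, ‖∑ k, rotatedCoeff x c t k‖ ^ 2 : ℝ) : ℂ) =
      ((b - a) * ∑ k, ‖c k‖ ^ 2 : ℝ) +
        (star (rotatedCoeff x c b) ⬝ᵥ hilbertMatrix x *ᵥ rotatedCoeff x c b -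
          star (rotatedCoeff x c a) ⬝ᵥ hilbertMatrix x *ᵥ rotatedCoeff x c a) := by
  classical
  have hderiv (t : ℝ) :
      HasDerivAt (fun s ↦ star (rotatedCoeff x c s) ⬝ᵥ hilbertMatrix x *ᵥ rotatedCoeff x c s)
        ((‖∑ k, rotatedCoeff x c t k‖ ^ 2 - ∑ k, ‖c k‖ ^ 2 : ℝ) : ℂ) t := by
    simpa only [smul_lie_hilbertMatrix_diagonal hx, star_dotProduct_vecMulVec_one_sub_one_mulVec,
      norm_rotatedCoeff_apply] using
      hasDerivAt_star_rotatedCoeff_dotProduct_mulVec (hilbertMatrix x) x c t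
  have hcont : Continuous fun t ↦ ‖∑ k, rotatedCoeff x c t k‖ ^ 2 := by
    unfold rotatedCoeff
    fun_prop
  rw [← intervalIntegral.integral_eq_sub_of_hasDerivAt (fun t _ ↦ hderiv t)
      (Continuous.intervalIntegrable (by fun_prop) a b),
    intervalIntegral.integral_ofReal, intervalIntegral.integral_sub
      (hcont.intervalIntegrable a b) intervalIntegrable_const,
    intervalIntegral.integral_const, smul_eq_mul, ofReal_sub, add_sub_cancel]

end ExponentialSum

theorem stmt_9_general {ι : Type*} [Fintype ι] {x : ι → ℝ} {δ : ℝ} (hδ : 0 < δ)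
    (hsep : Pairwise fun j k ↦ δ ≤ |x j - x k|) (c : ι → ℂ) (a b : ℝ) :
    |(∫ t in a..b, ‖∑ k, c k * exp (I * (x k * t))‖ ^ 2) - (b - a) * ∑ k, ‖c k‖ ^ 2| ≤
      2 * π / δ * ∑ k, ‖c k‖ ^ 2 := by
  classical
  let form (t : ℝ) : ℂ := star (rotatedCoeff x c t) ⬝ᵥ hilbertMatrix x *ᵥ rotatedCoeff x c t
  have hform (t : ℝ) : ‖form t‖ ≤ π / δ * ∑ k, ‖c k‖ ^ 2 := by
    calc ‖form t‖ ≤ ‖hilbertMatrix x‖ * ∑ k, ‖rotatedCoeff x c t k‖ ^ 2 :=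
          norm_star_dotProduct_mulVec_le _ _
      _ ≤ π / δ * ∑ k, ‖c k‖ ^ 2 := by
          simp only [norm_rotatedCoeff_apply]
          gcongr
          exact l2_opNorm_hilbertMatrix_le hδ hsep
  have hintegral := integral_norm_sum_rotatedCoeff_sq
    (injective_of_pairwise_le_abs_sub hδ hsep) c a b
  rw [← sub_eq_iff_eq_add', ← ofReal_sub] at hintegral
  calc |(∫ t in a..b, ‖∑ k, c k * exp (I * (x k * t))‖ ^ 2) - (b - a) * ∑ k, ‖c k‖ ^ 2|
      = ‖form b - form a‖ := by
        rw [← hintegral, norm_real, norm_eq_abs]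
        rfl
    _ ≤ ‖form b‖ + ‖form a‖ := norm_sub_le _ _
    _ ≤ π / δ * ∑ k, ‖c k‖ ^ 2 + π / δ * ∑ k, ‖c k‖ ^ 2 := add_le_add (hform b) (hform a)
    _ = 2 * π / δ * ∑ k, ‖c k‖ ^ 2 := by ring

/-- Montgomery–Vaughan type lower bound for the mean square of an exponential sum
with `δ`-separated frequencies. -/
theorem stmt_9 (N : ℕ) (lam : Fin N → ℝ) (c : Fin N → ℂ) (δ : ℝ) (hδ : 0 < δ)
    (hsep : ∀ j k : Fin N, j ≠ k → δ ≤ |lam j - lam k|) :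
    ∀ T : ℝ, 0 < T →
      (T - 2 * π / δ) * ∑ k, ‖c k‖ ^ 2 ≤
        ∫ s in (0:ℝ)..T, ‖∑ k, c k * Complex.exp (Complex.I * (lam k * s))‖ ^ 2 := by
  intro T _
  linarith [(abs_le.1 (stmt_9_general hδ (fun j k hjk ↦ hsep j k hjk) c 0 T)).1]
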